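/- Let Δ⃗=(Δ_1,…,Δ_d) be pairwise disjoint closed intervals. If u⃗ ∈ L¹(ω_{Δ⃗}) satisfies ℋ_{Δ⃗} u⃗ = u⃗, then u⃗ = 0⃗. Likewise, for intervals Δ*_i ⊆ Δ_i, if u⃗ ∈ C(Δ⃗) satisfies ℋ_{Δ⃗*,Δ⃗} u⃗ = u⃗, then u⃗ = 0⃗. -/

import Mathlib

open MeasureTheory Set Filter Topology Polynomial

noncomputable section

/-- The arcsine distribution `dω_[a,b](x) = dx/(π √((x−a)(b−x)))` on `[a,b]`. -/
def arcsineMeasure (a b : ℝ) : Measure ℝ :=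
  (volume.restrict (Set.Icc a b)).withDensity
    fun x => ENNReal.ofReal (1 / (Real.pi * Real.sqrt ((x - a) * (b - x))))

/-- The branch of `√((z−a)(z−b))` holomorphic off `[a,b]` with `w(z) = z + O(1)` at `∞`. -/
def wBranch (a b : ℝ) (z : ℂ) : ℂ :=
  (z - a) * Complex.exp ((1 / 2 : ℂ) * Complex.log ((z - b) / (z - a)))

/-- Cauchy transform `∫ u(x)/(z−x) dω_[a,b](x)`. -/
def cauchyT (a b : ℝ) (u : ℝ → ℝ) (z : ℂ) : ℂ :=
  ∫ x, (u x : ℂ) / (z - (x : ℂ)) ∂(arcsineMeasure a b)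

/-- `H_Δ u`, the harmonic extension of `u` off `Δ = [a,b]`. -/
def harmExt (a b : ℝ) (u : ℝ → ℝ) (z : ℂ) : ℝ :=
  (wBranch a b z * cauchyT a b u z).re

/-- The outer function `Ω_Δ(f,z) := exp( w_Δ(z) ∫ log f(x)/(z−x) dω_Δ(x) )`. -/
def OmegaFun (a b : ℝ) (f : ℝ → ℝ) (z : ℂ) : ℂ :=
  Complex.exp (wBranch a b z * cauchyT a b (fun x => Real.log (f x)) z)

/-- The value of `Ω_Δ(f,·)` at infinity: `exp( ∫ log f dω_Δ )`. -/
def OmegaInf (a b : ℝ) (f : ℝ → ℝ) : ℝ :=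
  Real.exp (∫ x, Real.log (f x) ∂(arcsineMeasure a b))

/-- Radon–Nikodym derivative `μ′` of `μ` with respect to Lebesgue measure. -/
def lebDeriv (μ : Measure ℝ) (x : ℝ) : ℝ := (μ.rnDeriv volume x).toReal

/-- `v_Δ(x) = π μ′(x) √((x−a)(b−x))`, the density of `μ|_Δ` w.r.t. the arcsine law. -/
def vDens (μ : Measure ℝ) (a b : ℝ) (x : ℝ) : ℝ :=
  Real.pi * lebDeriv μ x * Real.sqrt ((x - a) * (b - x))

/-- Szegő function `G(e^h μ|_[a,b], z)`. -/
def szegoG (μ : Measure ℝ) (a b : ℝ) (h : ℝ → ℝ) (z : ℂ) : ℂ :=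
  OmegaFun a b (fun x => Real.sqrt (Real.exp (h x) * vDens μ a b x)) z

/-- Szegő function `G(e^h μ|_[a,b], ·)` at infinity. -/
def szegoGInf (μ : Measure ℝ) (a b : ℝ) (h : ℝ → ℝ) : ℝ :=
  OmegaInf a b fun x => Real.sqrt (Real.exp (h x) * vDens μ a b x)

/-- Support of a measure on `ℝ`. -/
def msupp (μ : Measure ℝ) : Set ℝ := {x | ∀ ε > 0, 0 < μ (Metric.ball x ε)}

def suppInf (μ : Measure ℝ) : ℝ := sInf (msupp μ)
def suppSup (μ : Measure ℝ) : ℝ := sSup (msupp μ)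

/-- `Δ(μ)`, the convex hull of the support of `μ`. -/
def convHullSupp (μ : Measure ℝ) : Set ℝ := Set.Icc (suppInf μ) (suppSup μ)

/-- Logarithmic potential `V^ω(x) = −∫ log|x−t| dω(t)`. -/
def logPot (ω : Measure ℝ) (x : ℝ) : ℝ := -∫ t, Real.log |x - t| ∂ω

/-- The Szegő condition `μ ∈ Sz([a,b])`. -/
def SzCond (μ : Measure ℝ) (a b : ℝ) : Prop :=
  Integrable (fun x => Real.log (lebDeriv μ x)) (arcsineMeasure a b)

/-- The increasing affine map of `[a,b]` onto `[c,d]`. -/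
def affIcc (a b c d : ℝ) (x : ℝ) : ℝ := c + ((d - c) / (b - a)) * (x - a)

/-- The uniform Szegő condition `μ ∈ USz([a,b])`. -/
def USzCond (μ : Measure ℝ) (a b : ℝ) : Prop :=
  SzCond μ a b ∧
  ∀ A B : ℕ → ℝ, (∀ n, A n < B n) → (∀ n, Set.Icc (A n) (B n) ⊆ convHullSupp μ) →
    Tendsto A atTop (𝓝 a) → Tendsto B atTop (𝓝 b) →
    (∀ᶠ n in atTop, SzCond μ (A n) (B n)) ∧
    Tendsto (fun n => ∫ x,
        |Real.log (lebDeriv μ x) - Real.log (lebDeriv μ (affIcc a b (A n) (B n) x))|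
          ∂(arcsineMeasure a b)) atTop (𝓝 0)

/-- `P` is the `n`-th monic orthogonal polynomial with respect to `ν`. -/
def IsMonicOP (ν : Measure ℝ) (n : ℕ) (P : Polynomial ℝ) : Prop :=
  P.Monic ∧ P.natDegree = n ∧ ∀ k < n, ∫ x, x ^ k * P.eval x ∂ν = 0

/-- The weighted measure `e^θ μ`. -/
def expWt (μ : Measure ℝ) (θ : ℝ → ℝ) : Measure ℝ :=
  μ.withDensity fun x => ENNReal.ofReal (Real.exp (θ x))

/-- An Angelesco system of `d` measures, with `Δ(μ_i) = [lo i, hi i]`. -/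
structure Angelesco (d : ℕ) (μ : Fin d → Measure ℝ) (lo hi : Fin d → ℝ) : Prop where
  two_le : 2 ≤ d
  bounded : ∀ i, Bornology.IsBounded (msupp (μ i))
  infinite : ∀ i, (msupp (μ i)).Infinite
  lo_eq : ∀ i, lo i = suppInf (μ i)
  hi_eq : ∀ i, hi i = suppSup (μ i)
  sep : ∀ i j, i < j → hi i < lo j

/-- The vector equilibrium measure `(ω_1,…,ω_d)` with parameter `c`,
with `supp ω_i = [A i, B i] ⊆ [lo i, hi i]` and masses `c i`. -/
structure VecEquil (d : ℕ) (lo hi : Fin d → ℝ) (c : Fin d → ℝ)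
    (ω : Fin d → Measure ℝ) (A B : Fin d → ℝ) : Prop where
  endpoints : ∀ i, lo i ≤ A i ∧ A i < B i ∧ B i ≤ hi i
  supp : ∀ i, msupp (ω i) = Set.Icc (A i) (B i)
  mass : ∀ i, ω i Set.univ = ENNReal.ofReal (c i)
  equil : ∀ j, ∃ ℓ : ℝ,
    (∀ x ∈ Set.Icc (A j) (B j), logPot (ω j) x + ∑ i, logPot (ω i) x = ℓ) ∧
    (∀ x ∈ Set.Icc (lo j) (hi j) \ Set.Icc (A j) (B j),
        ℓ < logPot (ω j) x + ∑ i, logPot (ω i) x)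

/-- The vector `(S_1,…,S_d)` of conjugate-symmetric outer functions in `H²(D_{Δ_i})`,
positive at infinity, with boundary moduli `g_i` satisfying
`|S_{i±}|² ∏_{j≠i} S_j = v_i` a.e. on `Δ_i` (outer functions positive at infinity are
recovered from their boundary moduli by `S_i = Ω_{Δ_i}(g_i, ·)`). -/
def IsSzegoVector (d : ℕ) (A B : Fin d → ℝ) (v : Fin d → ℝ → ℝ)
    (g : Fin d → ℝ → ℝ) (S : Fin d → ℂ → ℂ) : Prop :=
  (∀ i x, 0 ≤ g i x) ∧
  (∀ i, Integrable (fun x => Real.log (g i x)) (arcsineMeasure (A i) (B i))) ∧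
  (∀ i, S i = fun z => OmegaFun (A i) (B i) (g i) z) ∧
  (∀ i, ∀ᵐ x ∂(arcsineMeasure (A i) (B i)),
    (g i x) ^ 2 * ∏ j ∈ Finset.univ.erase i, (S j (x : ℂ)).re = v i x)

/-- The operator `ℋ` with component `i` equal to `−(1/2) Σ_{j≠i} H_{[A j, B j]} u_j`. -/
def calH (d : ℕ) (A B : Fin d → ℝ) (u : Fin d → ℝ → ℝ) (i : Fin d) (x : ℝ) : ℝ :=
  -(1 / 2) * ∑ j ∈ Finset.univ.erase i, harmExt (A j) (B j) (u j) (x : ℂ)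

/-- sup norm over `[a,b]`. -/
def supIcc (a b : ℝ) (f : ℝ → ℝ) : ℝ := sSup ((fun x => |f x|) '' Set.Icc a b)

/-- Norm of `C(Δ⃗)`. -/
def vecCNorm (d : ℕ) (A B : Fin d → ℝ) (u : Fin d → ℝ → ℝ) : ℝ :=
  ∑ i, supIcc (A i) (B i) (u i)

/-- Norm of `C¹(Δ⃗)`. -/
def vecC1Norm (d : ℕ) (A B : Fin d → ℝ) (u : Fin d → ℝ → ℝ) : ℝ :=
  ∑ i, (supIcc (A i) (B i) (u i) +
    supIcc (A i) (B i) (derivWithin (u i) (Set.Icc (A i) (B i))))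

/-- membership in `C(Δ⃗)`. -/
def memVecC (d : ℕ) (A B : Fin d → ℝ) (u : Fin d → ℝ → ℝ) : Prop :=
  ∀ i, ContinuousOn (u i) (Set.Icc (A i) (B i))

/-- membership in `C¹(Δ⃗)`. -/
def memVecC1 (d : ℕ) (A B : Fin d → ℝ) (u : Fin d → ℝ → ℝ) : Prop :=
  ∀ i, ContDiffOn ℝ 1 (u i) (Set.Icc (A i) (B i))

/-- `|w_Δ(x)|` for real `x`. -/
def wAbs (p q x : ℝ) : ℝ := Real.sqrt |(x - p) * (x - q)|

/-- Riemann–Liouville type fractional integral of order 1/2. -/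
def fracInt (γ : ℝ) (θ : ℝ → ℝ) (x : ℝ) : ℝ :=
  (Real.sqrt Real.pi)⁻¹ * ∫ t in γ..x, θ t / Real.sqrt |x - t|

/-!
Let `h i` be the harmonic extension of the `i`-th component of a continuous fixed point to the
complement of `Δ i`. The equation `ℋ u = u` says that `h i = -∑ j, h j` on `Δ i`, so crosswise
gluing along the cuts turns the `h i` and `-∑ j, h j` into one harmonic function on a compact
surface. By the maximum principle it is a constant `M`, and `M = -∑ j, M` forces `M = 0`. Across
the cut `Δ k`, the maximum principle is applied to `-∑ j ≠ k, h j = h k - ∑ j, h j`, which is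
harmonic there, so that the surface itself is not needed.

That `h i` attains its boundary values is the Poisson integral: `Re (w(z) / (z - x))` is a positive
kernel of mass one with respect to the arcsine law, because the arcsine law is the projection of
the uniform law on the circle and the kernel is the average of two Poisson kernels of the disc. An
`L¹` fixed point agrees almost everywhere with its image under `ℋ`, which is continuous.
-/

/-- Bounded continuous functions on the plane that are harmonic off the real set `S`, with a
single-valued harmonic conjugate there. Boundedness makes the point at infinity a removable
singularity. -/
structure IsBddHarmonicOff (S : Set ℝ) (h : ℂ → ℝ) : Prop where
  continuous : Continuous h
  bounded : ∃ C, ∀ z, |h z| ≤ C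
  exists_eq_re : ∃ F : ℂ → ℂ, DifferentiableOn ℂ F (Complex.ofReal '' S)ᶜ ∧
    ∀ z ∈ (Complex.ofReal '' S)ᶜ, h z = (F z).re

theorem isClosed_ofReal_image {S : Set ℝ} (hS : IsClosed S) : IsClosed (Complex.ofReal '' S) :=
  Complex.isometry_ofReal.isClosedEmbedding.isClosedMap _ hS

theorem dense_compl_ofReal_image (S : Set ℝ) : Dense (Complex.ofReal '' S)ᶜ := by
  have hreal : Complex.ofReal '' S ⊆ Complex.im ⁻¹' {0} := by
    rintro _ ⟨x, -, rfl⟩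
    exact Complex.ofReal_im x
  refine Dense.mono (compl_subset_compl.2 hreal) ?_
  rw [← interior_eq_empty_iff_dense_compl, Complex.interior_preimage_im, interior_singleton,
    preimage_empty]

theorem isPreconnected_compl_ofReal_image {S : Set ℝ} (hS : S ≠ univ) :
    IsPreconnected (Complex.ofReal '' S)ᶜ := by
  obtain ⟨y, hy⟩ := (ne_univ_iff_exists_notMem S).1 hS
  set U := (Complex.ofReal '' S)ᶜ
  have mem_U_of_im_ne {z : ℂ} (hz : z.im ≠ 0) : z ∈ U := by
    rintro ⟨x, -, rfl⟩
    exact hz (Complex.ofReal_im x)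
  have hupper : IsPreconnected (U ∩ Complex.im ⁻¹' Ici 0) := by
    refine (convex_halfSpace_im_gt 0).isPreconnected.subset_closure
      (fun z (hz : 0 < z.im) => ⟨mem_U_of_im_ne hz.ne', hz.le⟩) ?_
    rw [← closure_Ioi, ← Complex.closure_preimage_im]
    exact inter_subset_right
  have hlower : IsPreconnected (U ∩ Complex.im ⁻¹' Iic 0) := by
    refine (convex_halfSpace_im_lt 0).isPreconnected.subset_closure
      (fun z (hz : z.im < 0) => ⟨mem_U_of_im_ne hz.ne, hz.le⟩) ?_
    rw [← closure_Iio, ← Complex.closure_preimage_im]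
    exact inter_subset_right
  have hyU : (y : ℂ) ∈ U := fun ⟨x, hx, hxy⟩ => hy (Complex.ofReal_injective hxy ▸ hx)
  have hy_both : ((U ∩ Complex.im ⁻¹' Ici 0) ∩ (U ∩ Complex.im ⁻¹' Iic 0)).Nonempty :=
    ⟨y, ⟨hyU, (Complex.ofReal_im y).ge⟩, ⟨hyU, (Complex.ofReal_im y).le⟩⟩
  have hunion := hupper.union' hy_both hlower
  rwa [← inter_union_distrib_left, ← preimage_union, Ici_union_Iic, preimage_univ,
    inter_univ] at hunion

namespace IsBddHarmonicOff

variable {S T : Set ℝ} {h : ℂ → ℝ}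

theorem mono (hh : IsBddHarmonicOff S h) (hST : S ⊆ T) : IsBddHarmonicOff T h := by
  obtain ⟨F, hF, hre⟩ := hh.exists_eq_re
  have hsub := compl_subset_compl.2 (image_mono (f := Complex.ofReal) hST)
  exact ⟨hh.continuous, hh.bounded, F, hF.mono hsub, fun z hz => hre z (hsub hz)⟩

theorem neg (hh : IsBddHarmonicOff S h) : IsBddHarmonicOff S fun z => -h z := by
  obtain ⟨C, hC⟩ := hh.bounded
  obtain ⟨F, hF, hre⟩ := hh.exists_eq_re
  refine ⟨hh.continuous.neg, ⟨C, fun z => ?_⟩, fun z => -F z, hF.fun_neg, fun z hz => ?_⟩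
  · rw [abs_neg]
    exact hC z
  · rw [hre z hz, Complex.neg_re]

theorem sum {ι : Type*} {s : Finset ι} {h : ι → ℂ → ℝ}
    (hh : ∀ i ∈ s, IsBddHarmonicOff S (h i)) : IsBddHarmonicOff S fun z => ∑ i ∈ s, h i z := by
  choose! C hC using fun i hi => (hh i hi).bounded
  choose! F hF hre using fun i hi => (hh i hi).exists_eq_re
  refine ⟨continuous_finsetSum _ fun i hi => (hh i hi).continuous,
    ⟨∑ i ∈ s, C i, fun z => ?_⟩, fun z => ∑ i ∈ s, F i z,
    DifferentiableOn.fun_sum hF, fun z hz => ?_⟩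
  · exact (Finset.abs_sum_le_sum_abs _ _).trans (Finset.sum_le_sum fun i hi => hC i hi z)
  · rw [Complex.re_sum]
    exact Finset.sum_congr rfl fun i hi => hre i hi z hz

theorem eq_of_forall_le (hh : IsBddHarmonicOff S h) (hS : IsCompact S) {z₀ : ℂ}
    (hz₀ : z₀ ∉ Complex.ofReal '' S) (hmax : ∀ z, h z ≤ h z₀) (z : ℂ) : h z = h z₀ := by
  obtain ⟨F, hF, hre⟩ := hh.exists_eq_re
  have norm_exp : ∀ z ∈ (Complex.ofReal '' S)ᶜ, ‖Complex.exp (F z)‖ = Real.exp (h z) :=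
    fun z hz => by rw [Complex.norm_exp, hre z hz]
  have heq : EqOn h (fun _ => h z₀) (Complex.ofReal '' S)ᶜ := fun z hz => by
    have hexp := Complex.norm_eqOn_of_isPreconnected_of_isMaxOn
      (isPreconnected_compl_ofReal_image hS.ne_univ)
      (isClosed_ofReal_image hS.isClosed).isOpen_compl hF.cexp hz₀
      (fun z hz => by simpa [norm_exp z hz, norm_exp z₀ hz₀] using hmax z) hz
    simpa [norm_exp z hz, norm_exp z₀ hz₀] using hexp
  exact congrFun (hh.continuous.ext_on (dense_compl_ofReal_image S) continuous_const heq) z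

/-- Only the real part `h` of `F` is known to be bounded, so Riemann's theorem on removable
singularities is applied to `exp F`. -/
theorem exists_norm_eq_exp_inv (hh : IsBddHarmonicOff S h) (hS : IsCompact S) :
    ∃ G : ℂ → ℂ, (∀ᶠ w in 𝓝 0, DifferentiableAt ℂ G w) ∧
      ∀ᶠ w in 𝓝[≠] 0, ‖G w‖ = Real.exp (h w⁻¹) := by
  obtain ⟨C, hC⟩ := hh.bounded
  obtain ⟨F, hF, hre⟩ := hh.exists_eq_re
  have hev : ∀ᶠ w in 𝓝[≠] (0 : ℂ), w⁻¹ ∈ (Complex.ofReal '' S)ᶜ :=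
    tendsto_inv₀_nhdsNE_zero.eventually
      (Bornology.isBounded_def.1 (hS.image Complex.continuous_ofReal).isBounded)
  obtain ⟨r, hr, hball⟩ := Metric.mem_nhdsWithin_iff.1 hev
  have hnhds : Metric.ball (0 : ℂ) r ∈ 𝓝 0 := Metric.ball_mem_nhds 0 hr
  set g : ℂ → ℂ := fun w => Complex.exp (F w⁻¹)
  have hnorm : ∀ w ∈ Metric.ball (0 : ℂ) r \ {0}, ‖g w‖ = Real.exp (h w⁻¹) := fun w hw => by
    rw [Complex.norm_exp, hre _ (hball hw)]
  have hdiff : DifferentiableOn ℂ g (Metric.ball 0 r \ {0}) :=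
    (hF.comp (differentiableOn_inv.mono fun w hw => hw.2) fun w hw => hball hw).cexp
  have hbdd : BddAbove (norm ∘ g '' (Metric.ball 0 r \ {0})) := by
    refine ⟨Real.exp C, forall_mem_image.2 fun w hw => ?_⟩
    rw [Function.comp_apply, hnorm w hw]
    exact Real.exp_le_exp.2 (abs_le.1 (hC _)).2
  refine ⟨Function.update g 0 (limUnder (𝓝[≠] 0) g), ?_, ?_⟩
  · filter_upwards [Metric.isOpen_ball.mem_nhds (Metric.mem_ball_self hr)] with w hw
    exact (Complex.differentiableOn_update_limUnder_of_bddAbove hnhds hdiff hbdd).differentiableAt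
      (Metric.isOpen_ball.mem_nhds hw)
  · filter_upwards [sdiff_mem_nhdsWithin_compl hnhds {0}] with w hw
    rw [Function.update_of_ne hw.2, hnorm w hw]

/-- The second clause is the strong maximum principle at the removable singularity `∞`. -/
theorem exists_tendsto_cocompact (hh : IsBddHarmonicOff S h) (hS : IsCompact S) :
    ∃ ℓ, Tendsto h (cocompact ℂ) (𝓝 ℓ) ∧ ((∀ z, h z ≤ ℓ) → ∃ z, h z = ℓ) := by
  obtain ⟨C, hC⟩ := hh.bounded
  obtain ⟨G, hG, hGh⟩ := hh.exists_norm_eq_exp_inv hS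
  have htend : Tendsto (fun w => ‖G w‖) (𝓝[≠] 0) (𝓝 ‖G 0‖) :=
    (hG.self_of_nhds.continuousAt.norm).tendsto.mono_left nhdsWithin_le_nhds
  have hpos : 0 < ‖G 0‖ := (Real.exp_pos (-C)).trans_le <| ge_of_tendsto htend <| by
    filter_upwards [hGh] with w hw
    exact hw ▸ Real.exp_le_exp.2 (abs_le.1 (hC _)).1
  have hinv : Tendsto (fun w => h w⁻¹) (𝓝[≠] 0) (𝓝 (Real.log ‖G 0‖)) := by
    refine (htend.log hpos.ne').congr' ?_
    filter_upwards [hGh] with w hw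
    rw [hw, Real.log_exp]
  refine ⟨Real.log ‖G 0‖, ?_, fun hle => ?_⟩
  · rw [← Metric.cobounded_eq_cocompact]
    exact (hinv.comp tendsto_inv₀_cobounded').congr fun z => by
      rw [Function.comp_apply, inv_inv]
  · have hmax : IsLocalMax (norm ∘ G) 0 := by
      filter_upwards [eventually_nhdsWithin_iff.1 hGh] with w hw
      rcases eq_or_ne w 0 with rfl | hne
      · exact le_rfl
      · rw [Function.comp_apply, hw hne, Function.comp_apply, ← Real.le_log_iff_exp_le hpos]
        exact hle _
    obtain ⟨w, hwG, hw⟩ :=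
      (hGh.and ((Complex.norm_eventually_eq_of_isLocalMax hG hmax).filter_mono
        nhdsWithin_le_nhds)).exists
    exact ⟨w⁻¹, by rw [← hw, hwG, Real.log_exp]⟩

theorem exists_mem_forall_le (hh : IsBddHarmonicOff S h) (hS : IsCompact S) (hne : S.Nonempty) :
    ∃ x ∈ S, ∀ z, h z ≤ h (x : ℂ) := by
  obtain ⟨z₀, hz₀⟩ : ∃ z₀, ∀ z, h z ≤ h z₀ := by
    obtain ⟨ℓ, htend, hattained⟩ := hh.exists_tendsto_cocompact hS
    by_cases hle : ∀ z, h z ≤ ℓ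
    · obtain ⟨z₀, hz₀⟩ := hattained hle
      exact ⟨z₀, fun z => hz₀ ▸ hle z⟩
    · push Not at hle
      obtain ⟨z₁, hz₁⟩ := hle
      exact hh.continuous.exists_forall_ge' z₁
        ((htend.eventually_lt_const hz₁).mono fun _ => le_of_lt)
  by_cases hmem : z₀ ∈ Complex.ofReal '' S
  · obtain ⟨x, hx, rfl⟩ := hmem
    exact ⟨x, hx, hz₀⟩
  · obtain ⟨x, hx⟩ := hne
    exact ⟨x, hx, fun z => (hz₀ z).trans_eq (hh.eq_of_forall_le hS hmem hz₀ x).symm⟩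

theorem eq_zero_of_add_sum_eq_zero {ι : Type*} [Fintype ι] {S : ι → Set ℝ} {h : ι → ℂ → ℝ}
    (hh : ∀ i, IsBddHarmonicOff (S i) (h i)) (hS : ∀ i, IsCompact (S i))
    (hne : ∀ i, (S i).Nonempty) (hdisj : Pairwise fun i j => Disjoint (S i) (S j))
    (hglue : ∀ i, ∀ x ∈ S i, h i x + ∑ j, h j x = 0) (i : ι) (z : ℂ) : h i z = 0 := by
  classical
  have hsum (s : Finset ι) : IsBddHarmonicOff (⋃ j ∈ s, S j) fun z => -∑ j ∈ s, h j z :=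
    (IsBddHarmonicOff.sum fun j hj => (hh j).mono (subset_biUnion_of_mem hj)).neg
  have hScompact (s : Finset ι) : IsCompact (⋃ j ∈ s, S j) := s.isCompact_biUnion fun j _ => hS j
  obtain ⟨x₀, hx₀, hmax⟩ := (hsum Finset.univ).exists_mem_forall_le (hScompact _)
    ((hne i).mono (subset_biUnion_of_mem (u := S) (Finset.mem_univ i)))
  obtain ⟨k, -, hx₀k⟩ := mem_iUnion₂.1 hx₀
  set M := -∑ j, h j x₀
  have le_M (j : ι) (z : ℂ) : h j z ≤ M := by
    obtain ⟨x, hx, hjmax⟩ := (hh j).exists_mem_forall_le (hS j) (hne j)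
    linarith [hjmax z, hglue j x hx, hmax x]
  have split (z : ℂ) : -∑ j ∈ Finset.univ.erase k, h j z = h k z + -∑ j, h j z := by
    rw [← Finset.add_sum_erase _ (fun j => h j z) (Finset.mem_univ k)]
    ring
  have hx₀_notMem : (x₀ : ℂ) ∉ Complex.ofReal '' ⋃ j ∈ Finset.univ.erase k, S j := by
    rw [Complex.ofReal_injective.mem_set_image, mem_iUnion₂]
    rintro ⟨j, hj, hx₀j⟩
    exact disjoint_left.1 (hdisj (Finset.ne_of_mem_erase hj)) hx₀j hx₀k
  have sum_eq (z : ℂ) : ∑ j, h j z = -M := by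
    have hconst := (hsum (Finset.univ.erase k)).eq_of_forall_le (hScompact _) hx₀_notMem
      (fun z => by linarith [split z, split x₀, le_M k z, hmax z, hglue k x₀ hx₀k]) z
    linarith [split z, split x₀, le_M k z, hmax z, hglue k x₀ hx₀k]
  have eq_M (j : ι) (z : ℂ) : h j z = M := by
    obtain ⟨x, hx, hjmax⟩ := (hh j).neg.exists_mem_forall_le (hS j) (hne j)
    linarith [le_M j z, hjmax z, hglue j x hx, sum_eq x]
  have hM : (Fintype.card ι + 1 : ℝ) * M = 0 := by
    have := sum_eq z
    simp only [eq_M, Finset.sum_const, Finset.card_univ, nsmul_eq_mul] at this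
    linarith
  rw [eq_M, (mul_eq_zero.1 hM).resolve_left (by positivity)]

end IsBddHarmonicOff

theorem ae_mem_arcsineMeasure (a b : ℝ) : ∀ᵐ x ∂arcsineMeasure a b, x ∈ Icc a b :=
  (withDensity_absolutelyContinuous _ _).ae_le (ae_restrict_mem measurableSet_Icc)

theorem integral_measureT_eq_circleAverage {f : ℝ → ℝ} (hf : ContinuousOn f (Icc (-1) 1)) :
    ∫ t, f t ∂Chebyshev.measureT = Real.pi * Real.circleAverage (fun ζ => f ζ.re) 0 1 := by
  have hcont : Continuous fun θ => f (Real.cos θ) :=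
    hf.comp_continuous Real.continuous_cos Real.cos_mem_Icc
  have hreflect : ∫ θ in Real.pi..2 * Real.pi, f (Real.cos θ) =
      ∫ θ in 0..Real.pi, f (Real.cos θ) := by
    have hsub := intervalIntegral.integral_comp_sub_left (a := 0) (b := Real.pi)
      (fun θ => f (Real.cos θ)) (2 * Real.pi)
    simp only [Real.cos_two_pi_sub, sub_zero] at hsub
    rw [hsub, two_mul, add_sub_cancel_right]
  rw [Chebyshev.integral_measureT_eq_integral_cos, Real.circleAverage_def]
  simp only [circleMap_zero, Complex.ofReal_one, one_mul, Complex.exp_ofReal_mul_I_re]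
  rw [← intervalIntegral.integral_add_adjacent_intervals (hcont.intervalIntegrable 0 Real.pi)
      (hcont.intervalIntegrable Real.pi (2 * Real.pi)), hreflect, smul_eq_mul]
  field

theorem integral_arcsineMeasure_eq_measureT {a b : ℝ} (hab : a < b) (f : ℝ → ℝ) :
    ∫ x, f x ∂arcsineMeasure a b =
      Real.pi⁻¹ * ∫ t, f ((a + b) / 2 + (b - a) / 2 * t) ∂Chebyshev.measureT := by
  set r := (b - a) / 2 with hr_def
  have hr : 0 < r := by linarith
  have density_eq (t : ℝ) :
      r * (1 / (Real.pi * √(((a + b) / 2 + r * t - a) * (b - ((a + b) / 2 + r * t))))) =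
        Real.pi⁻¹ * √(1 - t ^ 2)⁻¹ := by
    have hprod : ((a + b) / 2 + r * t - a) * (b - ((a + b) / 2 + r * t)) = r ^ 2 * (1 - t ^ 2) := by
      rw [hr_def]
      ring
    rw [hprod, Real.sqrt_mul (sq_nonneg r), Real.sqrt_sq hr.le, Real.sqrt_inv]
    field_simp
  have hleft : (a + b) / 2 + r * -1 = a := by rw [hr_def]; ring
  have hright : (a + b) / 2 + r * 1 = b := by rw [hr_def]; ring
  calc ∫ x, f x ∂arcsineMeasure a b
      = ∫ x in a..b, 1 / (Real.pi * √((x - a) * (b - x))) * f x := by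
        rw [arcsineMeasure, integral_withDensity_eq_integral_toReal_smul (by fun_prop)
          (ae_of_all _ fun x => ENNReal.ofReal_lt_top), integral_Icc_eq_integral_Ioc,
          ← intervalIntegral.integral_of_le hab.le]
        refine intervalIntegral.integral_congr fun x _ => ?_
        rw [ENNReal.toReal_ofReal (by positivity), smul_eq_mul]
    _ = ∫ t in -1..1, Real.pi⁻¹ * (f ((a + b) / 2 + r * t) * √(1 - t ^ 2)⁻¹) := by
        have := intervalIntegral.smul_integral_comp_add_mul (a := -1) (b := 1)
          (fun x => 1 / (Real.pi * √((x - a) * (b - x))) * f x) r ((a + b) / 2)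
        rw [hleft, hright] at this
        rw [← this, ← intervalIntegral.integral_smul]
        refine intervalIntegral.integral_congr fun t _ => ?_
        simp only [smul_eq_mul]
        rw [← mul_assoc, density_eq]
        ring
    _ = Real.pi⁻¹ * ∫ t, f ((a + b) / 2 + r * t) ∂Chebyshev.measureT := by
        rw [intervalIntegral.integral_const_mul, Chebyshev.integral_measureT]

theorem integral_arcsineMeasure {a b : ℝ} (hab : a < b) {f : ℝ → ℝ}
    (hf : ContinuousOn f (Icc a b)) :
    ∫ x, f x ∂arcsineMeasure a b =
      Real.circleAverage (fun ζ => f ((a + b) / 2 + (b - a) / 2 * ζ.re)) 0 1 := by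
  rw [integral_arcsineMeasure_eq_measureT hab, integral_measureT_eq_circleAverage,
    inv_mul_cancel_left₀ Real.pi_ne_zero]
  refine hf.comp (by fun_prop) fun t ht => ?_
  constructor <;> nlinarith [ht.1, ht.2]

theorem isProbabilityMeasure_arcsineMeasure {a b : ℝ} (hab : a < b) :
    IsProbabilityMeasure (arcsineMeasure a b) := by
  have hone := integral_arcsineMeasure hab (continuousOn_const (c := 1))
  rw [Real.circleAverage_const, integral_const, smul_eq_mul, mul_one] at hone
  exact ⟨by rw [← ENNReal.toReal_eq_one_iff]; exact hone⟩

/-- The branch of `√((z - b) / (z - a))` with positive real part off `[a, b]`; it is the factor in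
`wBranch a b z = (z - a) * sqrtRatio a b z`. -/
def sqrtRatio (a b : ℝ) (z : ℂ) : ℂ :=
  Complex.exp ((1 / 2 : ℂ) * Complex.log ((z - b) / (z - a)))

/-- The Poisson kernel of the domain `ℂ ∖ [a, b]` with respect to the arcsine law. -/
def slitPoissonKernel (a b : ℝ) (z : ℂ) (x : ℝ) : ℝ :=
  (wBranch a b z / (z - x)).re

section OffInterval

variable {a b : ℝ} {z : ℂ}

theorem ne_of_notMem_ofReal_image {S : Set ℝ} (hz : z ∉ Complex.ofReal '' S) {x : ℝ} (hx : x ∈ S) :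
    z ≠ x := fun h => hz ⟨x, hx, h.symm⟩

theorem div_sub_mem_slitPlane (hab : a ≤ b) (hz : z ∉ Complex.ofReal '' Icc a b) :
    (z - b) / (z - a) ∈ Complex.slitPlane := by
  have hza : z - a ≠ 0 := sub_ne_zero.2 (ne_of_notMem_ofReal_image hz (left_mem_Icc.2 hab))
  by_contra hq
  obtain ⟨hre, him⟩ := not_or.1 (Complex.mem_slitPlane_iff.not.1 hq)
  obtain ⟨t, ht⟩ : ∃ t : ℝ, (z - b) / (z - a) = t :=
    ⟨_, Complex.ext rfl (by simpa using him)⟩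
  rw [ht, Complex.ofReal_re, not_lt] at hre
  have hone : 0 < 1 - t := by linarith
  have hz_eq : ((b - t * a) / (1 - t) : ℝ) = z := by
    have : (1 - t : ℂ) ≠ 0 := by exact_mod_cast hone.ne'
    rw [div_eq_iff hza] at ht
    push_cast
    rw [div_eq_iff this]
    linear_combination -ht
  refine hz ⟨_, ⟨?_, ?_⟩, hz_eq⟩
  · rw [le_div_iff₀ hone]
    linarith
  · rw [div_le_iff₀ hone]
    nlinarith

theorem sqrtRatio_sq (hab : a ≤ b) (hz : z ∉ Complex.ofReal '' Icc a b) :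
    sqrtRatio a b z ^ 2 = (z - b) / (z - a) := by
  rw [sqrtRatio, ← Complex.exp_nat_mul, Nat.cast_ofNat, ← mul_assoc, mul_one_div_cancel two_ne_zero,
    one_mul, Complex.exp_log (Complex.slitPlane_ne_zero (div_sub_mem_slitPlane hab hz))]

theorem re_sqrtRatio_pos (hab : a ≤ b) (hz : z ∉ Complex.ofReal '' Icc a b) :
    0 < (sqrtRatio a b z).re := by
  have harg_upper := (Complex.arg_le_pi _).lt_of_ne
    (Complex.mem_slitPlane_iff_arg.1 (div_sub_mem_slitPlane hab hz)).1
  have harg_lower := Complex.neg_pi_lt_arg ((z - b) / (z - a))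
  have him : ((1 / 2 : ℂ) * Complex.log ((z - b) / (z - a))).im = ((z - b) / (z - a)).arg / 2 := by
    rw [show (1 / 2 : ℂ) = ((1 / 2 : ℝ) : ℂ) by push_cast; rfl, Complex.im_ofReal_mul,
      Complex.log_im]
    ring
  rw [sqrtRatio, Complex.exp_re, him]
  exact mul_pos (Real.exp_pos _) (Real.cos_pos_of_mem_Ioo ⟨by linarith, by linarith⟩)

theorem differentiableOn_wBranch (hab : a ≤ b) :
    DifferentiableOn ℂ (wBranch a b) (Complex.ofReal '' Icc a b)ᶜ := by
  unfold wBranch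
  have hratio : DifferentiableOn ℂ (fun z : ℂ => (z - b) / (z - a)) (Complex.ofReal '' Icc a b)ᶜ :=
    (differentiableOn_id.sub_const _).div (differentiableOn_id.sub_const _)
      fun z hz => sub_ne_zero.2 (ne_of_notMem_ofReal_image hz (left_mem_Icc.2 hab))
  exact (differentiableOn_id.sub_const _).mul
    ((hratio.clog fun z hz => div_sub_mem_slitPlane hab hz).const_mul _).cexp

theorem wBranch_sq (hab : a ≤ b) (hz : z ∉ Complex.ofReal '' Icc a b) :
    wBranch a b z ^ 2 = (z - a) * (z - b) := by
  have hza : z - a ≠ 0 := sub_ne_zero.2 (ne_of_notMem_ofReal_image hz (left_mem_Icc.2 hab))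
  rw [wBranch, mul_pow, ← sqrtRatio, sqrtRatio_sq hab hz]
  field_simp

theorem wBranch_div_sub (hab : a ≤ b) (hz : z ∉ Complex.ofReal '' Icc a b) (c : ℝ) :
    wBranch a b z / (z - ((a + b) / 2 + (b - a) / 2 * c : ℝ)) =
      2 * sqrtRatio a b z / ((1 - c) + (1 + c) * sqrtRatio a b z ^ 2) := by
  have hza : z - a ≠ 0 := sub_ne_zero.2 (ne_of_notMem_ofReal_image hz (left_mem_Icc.2 hab))
  have hden : z - ((a + b) / 2 + (b - a) / 2 * c : ℝ) =
      (z - a) * (((1 - c) + (1 + c) * sqrtRatio a b z ^ 2) / 2) := by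
    rw [sqrtRatio_sq hab hz]
    push_cast
    field
  rw [hden, wBranch, ← sqrtRatio, mul_div_mul_left _ _ hza]
  field

theorem ne_zero_of_re_pos (hz : 0 < z.re) : z ≠ 0 := fun h => hz.ne' (h ▸ Complex.zero_re)

theorem exists_affine_eq (hab : a < b) {x : ℝ} (hx : x ∈ Icc a b) :
    ∃ c ∈ Icc (-1 : ℝ) 1, (a + b) / 2 + (b - a) / 2 * c = x := by
  have hba : 0 < b - a := sub_pos.2 hab
  refine ⟨(2 * x - a - b) / (b - a), ⟨?_, ?_⟩, by field⟩
  · rw [le_div_iff₀ hba]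
    linarith [hx.1]
  · rw [div_le_iff₀ hba]
    linarith [hx.2]

theorem slitPoissonKernel_pos (hab : a < b) (hz : z ∉ Complex.ofReal '' Icc a b) {x : ℝ}
    (hx : x ∈ Icc a b) : 0 < slitPoissonKernel a b z x := by
  obtain ⟨c, ⟨hc_lower, hc_upper⟩, rfl⟩ := exists_affine_eq hab hx
  set s := sqrtRatio a b z
  have hs : 0 < s.re := re_sqrtRatio_pos hab.le hz
  have hs0 : s ≠ 0 := ne_zero_of_re_pos hs
  have hinv : 0 < (s⁻¹).re := by
    rw [Complex.inv_re]
    exact div_pos hs (Complex.normSq_pos.2 hs0)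
  have hden : 0 < ((1 - c : ℝ) * s⁻¹ + (1 + c : ℝ) * s).re := by
    rw [Complex.add_re, Complex.re_ofReal_mul, Complex.re_ofReal_mul]
    rcases hc_upper.eq_or_lt with rfl | hlt
    · linarith
    · exact add_pos_of_pos_of_nonneg (mul_pos (by linarith) hinv) (mul_nonneg (by linarith) hs.le)
  have hkernel : wBranch a b z / (z - ((a + b) / 2 + (b - a) / 2 * c : ℝ)) =
      (2 : ℝ) * ((1 - c : ℝ) * s⁻¹ + (1 + c : ℝ) * s)⁻¹ := by
    rw [wBranch_div_sub hab.le hz]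
    push_cast
    field
  rw [slitPoissonKernel, hkernel, Complex.re_ofReal_mul, Complex.inv_re]
  exact mul_pos two_pos (div_pos hden (Complex.normSq_pos.2 (ne_zero_of_re_pos hden)))

theorem continuousOn_slitPoissonKernel (hz : z ∉ Complex.ofReal '' Icc a b) :
    ContinuousOn (slitPoissonKernel a b z) (Icc a b) := by
  unfold slitPoissonKernel
  exact Complex.continuous_re.comp_continuousOn (continuousOn_const.div (by fun_prop)
    fun x hx => sub_ne_zero.2 (ne_of_notMem_ofReal_image hz hx))

theorem circleAverage_poissonKernel {p : ℂ} (hp : p ∈ Metric.ball 0 1) :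
    Real.circleAverage (poissonKernel 0 p) 0 1 = 1 := by
  have hsmul : poissonKernel 0 p • (fun _ => (1 : ℝ)) = poissonKernel 0 p :=
    funext fun _ => mul_one _
  rw [← hsmul]
  exact InnerProductSpace.HarmonicOnNhd.circleAverage_poissonKernel_smul
    (InnerProductSpace.harmonicOnNhd_const 1) hp

theorem circleIntegrable_poissonKernel {p : ℂ} (hp : p ∈ Metric.ball 0 1) :
    CircleIntegrable (poissonKernel 0 p) 0 1 := by
  rw [poissonKernel_eq_re_herglotzRieszKernel]
  exact (Complex.continuous_re.comp_continuousOn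
    (continuousOn_herglotzRieszKernel_sphere hp)).circleIntegrable'

/-- The point of the unit disc corresponding to `z` under the conformal map of `ℂ̄ ∖ [a, b]`. -/
def discPoint (a b : ℝ) (z : ℂ) : ℂ :=
  (1 - sqrtRatio a b z) / (1 + sqrtRatio a b z)

theorem discPoint_mem_ball (hab : a ≤ b) (hz : z ∉ Complex.ofReal '' Icc a b) :
    discPoint a b z ∈ Metric.ball 0 1 := by
  have hs := re_sqrtRatio_pos hab hz
  have hlt : ‖1 - sqrtRatio a b z‖ < ‖1 + sqrtRatio a b z‖ := by
    rw [← sq_lt_sq₀ (norm_nonneg _) (norm_nonneg _), Complex.sq_norm, Complex.sq_norm,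
      Complex.normSq_sub, Complex.normSq_add]
    simp only [one_mul, Complex.conj_re]
    linarith
  rw [mem_ball_zero_iff, discPoint, norm_div, div_lt_one ((norm_nonneg _).trans_lt hlt)]
  exact hlt

theorem wBranch_div_sub_re (hab : a ≤ b) (hz : z ∉ Complex.ofReal '' Icc a b) {ζ : ℂ}
    (hζ : ‖ζ‖ = 1) :
    wBranch a b z / (z - ((a + b) / 2 + (b - a) / 2 * ζ.re : ℝ)) =
      (1 / 2 : ℝ) * ((ζ + discPoint a b z) / (ζ - discPoint a b z) +
        (ζ⁻¹ + discPoint a b z) / (ζ⁻¹ - discPoint a b z)) := by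
  set p := discPoint a b z with hp_def
  set s := sqrtRatio a b z
  have hp : ‖p‖ < 1 := mem_ball_zero_iff.1 (discPoint_mem_ball hab hz)
  have hs : 1 + s ≠ 0 := ne_zero_of_re_pos
    (add_pos_of_pos_of_nonneg one_pos (re_sqrtRatio_pos hab hz).le)
  have hζ0 : ζ ≠ 0 := norm_ne_zero_iff.1 (hζ ▸ one_ne_zero)
  have hre : (ζ.re : ℂ) = (ζ + ζ⁻¹) / 2 := by
    rw [Complex.inv_eq_conj hζ, Complex.re_eq_add_conj]
  have hsub : ζ - p ≠ 0 := sub_ne_zero.2 fun h => (h ▸ hp).ne hζ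
  have hsub_inv : ζ⁻¹ - p ≠ 0 :=
    sub_ne_zero.2 fun h => (h ▸ hp).ne (by rw [norm_inv, hζ, inv_one])
  have hden : (1 - ζ.re) + (1 + ζ.re) * s ^ 2 = (1 + s) ^ 2 / 2 * ((ζ - p) * (ζ⁻¹ - p)) := by
    rw [hre, hp_def, discPoint]
    field
  have hnum : 2 * s = (1 + s) ^ 2 / 2 * (1 - p ^ 2) := by
    rw [hp_def, discPoint]
    field
  have hsum : (ζ + p) / (ζ - p) + (ζ⁻¹ + p) / (ζ⁻¹ - p) =
      2 * ((1 - p ^ 2) / ((ζ - p) * (ζ⁻¹ - p))) := by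
    rw [div_add_div _ _ hsub hsub_inv, ← mul_div_assoc]
    congr 1
    field
  rw [wBranch_div_sub hab hz, hden, hsum, hnum,
    mul_div_mul_left _ _ (div_ne_zero (pow_ne_zero 2 hs) two_ne_zero)]
  push_cast
  ring

theorem slitPoissonKernel_eq_poissonKernel (hab : a ≤ b) (hz : z ∉ Complex.ofReal '' Icc a b)
    {ζ : ℂ} (hζ : ‖ζ‖ = 1) :
    slitPoissonKernel a b z ((a + b) / 2 + (b - a) / 2 * ζ.re) = (1 / 2) *
      (poissonKernel 0 (discPoint a b z) ζ +
        poissonKernel 0 (starRingEnd ℂ (discPoint a b z)) ζ) := by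
  have hker (p : ℂ) : poissonKernel 0 p ζ = ((ζ + p) / (ζ - p)).re := by
    simp [poissonKernel_eq_re_herglotzRieszKernel, herglotzRieszKernel_def]
  have hker_conj (p : ℂ) :
      poissonKernel 0 (starRingEnd ℂ p) ζ = ((ζ⁻¹ + p) / (ζ⁻¹ - p)).re := by
    rw [hker, Complex.inv_eq_conj hζ, ← Complex.conj_re, map_div₀, map_add, map_sub,
      Complex.conj_conj]
  rw [slitPoissonKernel, wBranch_div_sub_re hab hz hζ, Complex.re_ofReal_mul, Complex.add_re,
    hker, hker_conj]

theorem integral_slitPoissonKernel (hab : a < b) (hz : z ∉ Complex.ofReal '' Icc a b) :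
    ∫ x, slitPoissonKernel a b z x ∂arcsineMeasure a b = 1 := by
  have hp := discPoint_mem_ball hab.le hz
  have hp_conj : starRingEnd ℂ (discPoint a b z) ∈ Metric.ball 0 1 := by
    rwa [mem_ball_zero_iff, RCLike.norm_conj, ← mem_ball_zero_iff]
  have hsphere : EqOn (fun ζ : ℂ => slitPoissonKernel a b z ((a + b) / 2 + (b - a) / 2 * ζ.re))
      ((1 / 2 : ℝ) • (poissonKernel 0 (discPoint a b z) +
        poissonKernel 0 (starRingEnd ℂ (discPoint a b z)))) (Metric.sphere 0 |1|) := fun ζ hζ =>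
    slitPoissonKernel_eq_poissonKernel hab.le hz (by simpa using hζ)
  rw [integral_arcsineMeasure hab (continuousOn_slitPoissonKernel hz),
    Real.circleAverage_congr_sphere hsphere, Real.circleAverage_smul, Real.circleAverage_add
      (circleIntegrable_poissonKernel hp) (circleIntegrable_poissonKernel hp_conj),
    circleAverage_poissonKernel hp, circleAverage_poissonKernel hp_conj]
  norm_num

end OffInterval

section CauchyTransform

variable {S : Set ℝ} {μ : Measure ℝ} {u : ℝ → ℝ} {z : ℂ}

theorem exists_forall_le_norm_sub (hS : IsClosed S) (hz : z ∉ Complex.ofReal '' S) :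
    ∃ r > 0, ∀ w ∈ Metric.ball z r, ∀ x ∈ S, r ≤ ‖w - x‖ := by
  obtain ⟨r, hr, hball⟩ := Metric.isOpen_iff.1 (isClosed_ofReal_image hS).isOpen_compl z hz
  refine ⟨r / 2, half_pos hr, fun w hw x hx => ?_⟩
  have hzx : r ≤ dist (x : ℂ) z := not_lt.1 fun hlt => hball hlt ⟨x, hx, rfl⟩
  rw [← dist_eq_norm, dist_comm]
  linarith [dist_triangle (x : ℂ) w z, Metric.mem_ball.1 hw]

theorem aestronglyMeasurable_div_sub_pow (hu : AEStronglyMeasurable u μ) (z : ℂ) (n : ℕ) :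
    AEStronglyMeasurable (fun x : ℝ => (u x : ℂ) / (z - x) ^ n) μ := by
  have hkernel : Measurable fun x : ℝ => ((z - x) ^ n)⁻¹ := by fun_prop
  simp only [div_eq_mul_inv]
  exact (Complex.continuous_ofReal.comp_aestronglyMeasurable hu).mul hkernel.aestronglyMeasurable

theorem integrable_div_sub (hS : IsClosed S) (hμ : ∀ᵐ x ∂μ, x ∈ S) (hu : Integrable u μ)
    (hz : z ∉ Complex.ofReal '' S) : Integrable (fun x : ℝ => (u x : ℂ) / (z - x)) μ := by
  obtain ⟨r, hr, hle⟩ := exists_forall_le_norm_sub hS hz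
  refine (hu.norm.div_const r).mono'
    (by simpa only [pow_one] using aestronglyMeasurable_div_sub_pow hu.1 z 1) ?_
  filter_upwards [hμ] with x hx
  rw [norm_div, Complex.norm_real]
  exact div_le_div_of_nonneg_left (norm_nonneg _) hr (hle z (Metric.mem_ball_self hr) x hx)

theorem differentiableOn_integral_div_sub (hS : IsClosed S) (hμ : ∀ᵐ x ∂μ, x ∈ S)
    (hu : Integrable u μ) :
    DifferentiableOn ℂ (fun z => ∫ x, (u x : ℂ) / (z - x) ∂μ) (Complex.ofReal '' S)ᶜ := by
  intro z hz
  obtain ⟨r, hr, hle⟩ := exists_forall_le_norm_sub hS hz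
  refine (hasDerivAt_integral_of_dominated_loc_of_deriv_le (Metric.ball_mem_nhds z hr)
    (F' := fun w x => -((u x : ℂ) / (w - x) ^ 2)) (bound := fun x => ‖u x‖ / r ^ 2)
    (.of_forall fun w => ?_) (integrable_div_sub hS hμ hu hz)
    (aestronglyMeasurable_div_sub_pow hu.1 z 2).neg ?_
    (hu.norm.div_const _) ?_).2.differentiableAt.differentiableWithinAt
  · simpa only [pow_one] using aestronglyMeasurable_div_sub_pow hu.1 w 1
  · filter_upwards [hμ] with x hx w hw
    rw [norm_neg, norm_div, norm_pow, Complex.norm_real]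
    gcongr
    exact hle w hw x hx
  · filter_upwards [hμ] with x hx w hw
    have hne : w - x ≠ 0 := norm_pos_iff.1 (hr.trans_le (hle w hw x hx))
    have hderiv := (((hasDerivAt_id' w).sub_const (x : ℂ)).fun_inv hne).const_mul (u x : ℂ)
    simp only [← div_eq_mul_inv] at hderiv
    exact hderiv.congr_deriv (by ring)

end CauchyTransform

section HarmExt

variable {a b : ℝ} {u v : ℝ → ℝ} {z : ℂ}

theorem exists_differentiableOn_harmExt_eq_re (hab : a ≤ b)
    (hu : Integrable u (arcsineMeasure a b)) :
    ∃ F : ℂ → ℂ, DifferentiableOn ℂ F (Complex.ofReal '' Icc a b)ᶜ ∧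
      ∀ z, harmExt a b u z = (F z).re :=
  ⟨_, (differentiableOn_wBranch hab).mul
    (differentiableOn_integral_div_sub isClosed_Icc (ae_mem_arcsineMeasure a b) hu), fun _ => rfl⟩

theorem harmExt_congr_ae (huv : u =ᵐ[arcsineMeasure a b] v) (z : ℂ) :
    harmExt a b u z = harmExt a b v z := by
  have hint : cauchyT a b u z = cauchyT a b v z := integral_congr_ae <| by
    filter_upwards [huv] with x hx
    rw [hx]
  rw [harmExt, harmExt, hint]

theorem harmExt_eq_integral (hu : Integrable u (arcsineMeasure a b))
    (hz : z ∉ Complex.ofReal '' Icc a b) :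
    harmExt a b u z = ∫ x, slitPoissonKernel a b z x * u x ∂arcsineMeasure a b := by
  have hint := (integrable_div_sub isClosed_Icc (ae_mem_arcsineMeasure a b) hu hz).const_mul
    (wBranch a b z)
  rw [harmExt, cauchyT, ← integral_const_mul, ← RCLike.re_eq_complex_re, ← integral_re hint]
  refine integral_congr_ae (.of_forall fun x => ?_)
  simp only [RCLike.re_eq_complex_re, slitPoissonKernel]
  rw [← Complex.re_mul_ofReal]
  ring_nf

theorem integrable_arcsineMeasure (hab : a < b) (hu : ContinuousOn u (Icc a b)) :
    Integrable u (arcsineMeasure a b) := by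
  have := isProbabilityMeasure_arcsineMeasure hab
  rw [← Measure.restrict_eq_self_of_ae_mem (ae_mem_arcsineMeasure a b)]
  exact hu.integrableOn_Icc

theorem abs_harmExt_le (hab : a < b) (hu : Integrable u (arcsineMeasure a b)) {C : ℝ}
    (hC : ∀ x ∈ Icc a b, |u x| ≤ C) (hz : z ∉ Complex.ofReal '' Icc a b) :
    |harmExt a b u z| ≤ C := by
  have hint := (integrable_arcsineMeasure hab (continuousOn_slitPoissonKernel hz)).mul_const C
  have hle : ∀ᵐ x ∂arcsineMeasure a b,
      ‖slitPoissonKernel a b z x * u x‖ ≤ slitPoissonKernel a b z x * C := by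
    filter_upwards [ae_mem_arcsineMeasure a b] with x hx
    have hpos := slitPoissonKernel_pos hab hz hx
    rw [norm_mul, Real.norm_of_nonneg hpos.le]
    exact mul_le_mul_of_nonneg_left (hC x hx) hpos.le
  calc |harmExt a b u z| ≤ ∫ x, slitPoissonKernel a b z x * C ∂arcsineMeasure a b := by
        rw [harmExt_eq_integral hu hz]
        exact norm_integral_le_of_norm_le hint hle
    _ = C := by rw [integral_mul_const, integral_slitPoissonKernel hab hz, one_mul]

theorem tendsto_wBranch_sq (hab : a ≤ b) (x₀ : ℝ) :
    Tendsto (fun z => wBranch a b z ^ 2) (𝓝[(Complex.ofReal '' Icc a b)ᶜ] (x₀ : ℂ))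
      (𝓝 ((x₀ - a) * (x₀ - b) : ℝ)) := by
  have hcont : Continuous fun z : ℂ => (z - a) * (z - b) := by fun_prop
  have htend := (hcont.tendsto x₀).mono_left
    (nhdsWithin_le_nhds (s := (Complex.ofReal '' Icc a b)ᶜ))
  push_cast
  refine htend.congr' ?_
  filter_upwards [self_mem_nhdsWithin] with z hz
  exact (wBranch_sq hab hz).symm

theorem tendsto_re_wBranch (hab : a ≤ b) {x₀ : ℝ} (hx₀ : x₀ ∈ Icc a b) :
    Tendsto (fun z => (wBranch a b z).re) (𝓝[(Complex.ofReal '' Icc a b)ᶜ] (x₀ : ℂ)) (𝓝 0) := by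
  have hsq := tendsto_wBranch_sq hab x₀
  have hnonpos : (x₀ - a) * (x₀ - b) ≤ 0 :=
    mul_nonpos_of_nonneg_of_nonpos (sub_nonneg.2 hx₀.1) (sub_nonpos.2 hx₀.2)
  have re_sq (w : ℂ) : w.re ^ 2 = (‖w ^ 2‖ + (w ^ 2).re) / 2 := by
    rw [norm_pow, Complex.sq_norm, Complex.normSq_apply, sq w, Complex.mul_re]
    ring
  have hre_sq := ((hsq.norm.add (Complex.continuous_re.continuousAt.tendsto.comp hsq)).div_const
    2).sqrt
  rw [Complex.norm_real, Real.norm_of_nonpos hnonpos, Complex.ofReal_re, neg_add_cancel, zero_div,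
    Real.sqrt_zero] at hre_sq
  refine (tendsto_zero_iff_abs_tendsto_zero _).2 (hre_sq.congr fun z => ?_)
  rw [Function.comp_apply, Function.comp_apply, ← re_sq, Real.sqrt_sq_eq_abs]

theorem tendsto_norm_wBranch_mul_im (hab : a ≤ b) (x₀ : ℝ) :
    Tendsto (fun z => ‖wBranch a b z‖ * |z.im|) (𝓝[(Complex.ofReal '' Icc a b)ᶜ] (x₀ : ℂ))
      (𝓝 0) := by
  have hnorm := (tendsto_wBranch_sq hab x₀).norm.sqrt
  simp only [norm_pow, Real.sqrt_sq (norm_nonneg _)] at hnorm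
  have him : Tendsto (fun z : ℂ => |z.im|) (𝓝[(Complex.ofReal '' Icc a b)ᶜ] (x₀ : ℂ)) (𝓝 0) := by
    have := (Complex.continuous_im.abs.tendsto (x₀ : ℂ)).mono_left
      (nhdsWithin_le_nhds (s := (Complex.ofReal '' Icc a b)ᶜ))
    rwa [Complex.ofReal_im, abs_zero] at this
  simpa only [mul_zero] using hnorm.mul him

theorem abs_slitPoissonKernel_le {x δ : ℝ} (hδ : 0 < δ) (hx : δ ≤ ‖z - x‖) :
    |slitPoissonKernel a b z x| ≤
      |(wBranch a b z).re| / δ + ‖wBranch a b z‖ * |z.im| / δ ^ 2 := by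
  set w := wBranch a b z
  have hpos : 0 < ‖z - x‖ := hδ.trans_le hx
  have hsplit : slitPoissonKernel a b z x =
      w.re * (z - x).re / ‖z - x‖ ^ 2 + w.im * z.im / ‖z - x‖ ^ 2 := by
    rw [slitPoissonKernel, Complex.div_re, Complex.sq_norm, Complex.sub_im, Complex.ofReal_im,
      sub_zero]
  have hre : |w.re * (z - x).re / ‖z - x‖ ^ 2| ≤ |w.re| / δ := by
    calc |w.re * (z - x).re / ‖z - x‖ ^ 2| ≤ |w.re| * ‖z - x‖ / ‖z - x‖ ^ 2 := by
          rw [abs_div, abs_mul, abs_of_nonneg (sq_nonneg ‖z - x‖)]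
          gcongr
          exact Complex.abs_re_le_norm _
      _ = |w.re| / ‖z - x‖ := by field
      _ ≤ |w.re| / δ := by gcongr
  have him : |w.im * z.im / ‖z - x‖ ^ 2| ≤ ‖w‖ * |z.im| / δ ^ 2 := by
    rw [abs_div, abs_mul, abs_of_nonneg (sq_nonneg ‖z - x‖)]
    gcongr
    exact Complex.abs_im_le_norm w
  rw [hsplit]
  exact (abs_add_le _ _).trans (add_le_add hre him)

theorem tendstoUniformlyOn_slitPoissonKernel (hab : a ≤ b) {x₀ : ℝ} (hx₀ : x₀ ∈ Icc a b)
    {U : Set ℝ} (hU : U ∈ 𝓝 x₀) :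
    TendstoUniformlyOn (slitPoissonKernel a b) 0 (𝓝[(Complex.ofReal '' Icc a b)ᶜ] (x₀ : ℂ)) Uᶜ := by
  obtain ⟨δ, hδ, hball⟩ := Metric.mem_nhds_iff.1 hU
  have hδ2 : 0 < δ / 2 := half_pos hδ
  have hbound := ((tendsto_re_wBranch hab hx₀).abs.div_const (δ / 2)).add
    ((tendsto_norm_wBranch_mul_im hab x₀).div_const ((δ / 2) ^ 2))
  rw [abs_zero, zero_div, zero_div, add_zero] at hbound
  rw [Metric.tendstoUniformlyOn_iff]
  intro ε hε
  filter_upwards [hbound.eventually_lt_const hε,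
    nhdsWithin_le_nhds (Metric.ball_mem_nhds _ hδ2)] with z hlt hz x hx
  have hdist : δ ≤ dist (x : ℂ) x₀ := by
    rw [Complex.isometry_ofReal.dist_eq]
    exact not_lt.1 fun h => hx (hball h)
  have hzx : δ / 2 ≤ ‖z - x‖ := by
    rw [← dist_eq_norm, dist_comm]
    linarith [dist_triangle (x : ℂ) z x₀, Metric.mem_ball.1 hz]
  rw [Pi.zero_apply, dist_zero_left]
  exact (abs_slitPoissonKernel_le hδ2 hzx).trans_lt hlt

theorem tendsto_harmExt (hab : a < b) (hu : ContinuousOn u (Icc a b)) {x₀ : ℝ}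
    (hx₀ : x₀ ∈ Icc a b) :
    Tendsto (harmExt a b u) (𝓝[(Complex.ofReal '' Icc a b)ᶜ] (x₀ : ℂ)) (𝓝 (u x₀)) := by
  have := isProbabilityMeasure_arcsineMeasure hab
  have hrestrict := Measure.restrict_eq_self_of_ae_mem (ae_mem_arcsineMeasure a b)
  have hpeak : Tendsto
      (fun z => ∫ x in Icc a b, slitPoissonKernel a b z x • u x ∂arcsineMeasure a b)
      (𝓝[(Complex.ofReal '' Icc a b)ᶜ] (x₀ : ℂ)) (𝓝 (u x₀)) := by
    refine tendsto_setIntegral_peak_smul_of_integrableOn_of_tendsto measurableSet_Icc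
      measurableSet_Icc subset_rfl self_mem_nhdsWithin (measure_ne_top _ _) ?_ ?_ ?_ ?_
      hu.integrableOn_Icc (hu x₀ hx₀)
    · filter_upwards [self_mem_nhdsWithin] with z hz x hx
      exact (slitPoissonKernel_pos hab hz hx).le
    · exact fun U hU hxU => (tendstoUniformlyOn_slitPoissonKernel hab.le hx₀
        (hU.mem_nhds hxU)).mono fun x hx => hx.2
    · refine tendsto_const_nhds.congr' ?_
      filter_upwards [self_mem_nhdsWithin] with z hz
      rw [hrestrict, integral_slitPoissonKernel hab hz]
    · filter_upwards [self_mem_nhdsWithin] with z hz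
      exact (continuousOn_slitPoissonKernel hz).aestronglyMeasurable measurableSet_Icc
  refine hpeak.congr' ?_
  filter_upwards [self_mem_nhdsWithin] with z hz
  rw [hrestrict, harmExt_eq_integral (integrable_arcsineMeasure hab hu) hz]
  rfl

end HarmExt

section DirichletExt

variable {a b : ℝ} {u : ℝ → ℝ}

open Classical in
/-- The solution of the Dirichlet problem off `[a, b]` with boundary data `u`: the extension of
`harmExt a b u` by the boundary values `u` on `[a, b]`. -/
def dirichletExt (a b : ℝ) (u : ℝ → ℝ) (z : ℂ) : ℝ :=
  if z ∈ Complex.ofReal '' Icc a b then u z.re else harmExt a b u z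

theorem dirichletExt_of_mem {x : ℝ} (hx : x ∈ Icc a b) : dirichletExt a b u x = u x :=
  if_pos (mem_image_of_mem _ hx)

theorem dirichletExt_of_notMem {z : ℂ} (hz : z ∉ Complex.ofReal '' Icc a b) :
    dirichletExt a b u z = harmExt a b u z :=
  if_neg hz

theorem continuous_dirichletExt (hab : a < b) (hu : ContinuousOn u (Icc a b)) :
    Continuous (dirichletExt a b u) := by
  obtain ⟨F, hF, hre⟩ :=
    exists_differentiableOn_harmExt_eq_re hab.le (integrable_arcsineMeasure hab hu)
  refine continuous_iff_continuousAt.2 fun z => ?_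
  by_cases hz : z ∈ Complex.ofReal '' Icc a b
  · obtain ⟨x₀, hx₀, rfl⟩ := hz
    rw [← continuousWithinAt_univ, ← union_compl_self (Complex.ofReal '' Icc a b)]
    refine .union ?_ ?_
    · have hcont : ContinuousOn (fun z : ℂ => u z.re) (Complex.ofReal '' Icc a b) :=
        hu.comp Complex.continuous_re.continuousOn (forall_mem_image.2 fun x hx => hx)
      exact (hcont x₀ (mem_image_of_mem _ hx₀)).congr
        (forall_mem_image.2 fun x hx => dirichletExt_of_mem hx) (dirichletExt_of_mem hx₀)
    · rw [ContinuousWithinAt, dirichletExt_of_mem hx₀]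
      refine (tendsto_harmExt hab hu hx₀).congr' ?_
      filter_upwards [self_mem_nhdsWithin] with z hz using (dirichletExt_of_notMem hz).symm
  · have hnhds := (isClosed_ofReal_image isClosed_Icc).isOpen_compl.mem_nhds hz
    refine (Complex.continuous_re.continuousAt.comp (hF.continuousOn.continuousAt hnhds)).congr ?_
    filter_upwards [hnhds] with w hw
    rw [dirichletExt_of_notMem hw, hre, Function.comp_apply]

theorem isBddHarmonicOff_dirichletExt (hab : a < b) (hu : ContinuousOn u (Icc a b)) :
    IsBddHarmonicOff (Icc a b) (dirichletExt a b u) := by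
  have hint := integrable_arcsineMeasure hab hu
  obtain ⟨C, hC⟩ := isCompact_Icc.exists_bound_of_continuousOn hu
  obtain ⟨F, hF, hre⟩ := exists_differentiableOn_harmExt_eq_re hab.le hint
  refine ⟨continuous_dirichletExt hab hu, ⟨C, fun z => ?_⟩, F, hF, fun z hz => ?_⟩
  · by_cases hz : z ∈ Complex.ofReal '' Icc a b
    · obtain ⟨x, hx, rfl⟩ := hz
      rw [dirichletExt_of_mem hx]
      exact hC x hx
    · rw [dirichletExt_of_notMem hz]
      exact abs_harmExt_le hab hint hC hz
  · rw [dirichletExt_of_notMem hz, hre]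

end DirichletExt

section FixedPoint

variable {d : ℕ} {A B : Fin d → ℝ} {u v : Fin d → ℝ → ℝ}

theorem calH_congr_ae (huv : ∀ i, u i =ᵐ[arcsineMeasure (A i) (B i)] v i) (i : Fin d) (x : ℝ) :
    calH d A B u i x = calH d A B v i x := by
  simp only [calH, harmExt_congr_ae (huv _)]

theorem continuousOn_calH (hAB : ∀ i, A i ≤ B i)
    (hdisj : Pairwise fun i j => Disjoint (Icc (A i) (B i)) (Icc (A j) (B j)))
    (hu : ∀ i, Integrable (u i) (arcsineMeasure (A i) (B i))) (i : Fin d) :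
    ContinuousOn (calH d A B u i) (Icc (A i) (B i)) := by
  refine continuousOn_const.mul (continuousOn_finsetSum _ fun j hj => ?_)
  obtain ⟨F, hF, hre⟩ := exists_differentiableOn_harmExt_eq_re (hAB j) (hu j)
  simp only [hre]
  refine Complex.continuous_re.comp_continuousOn
    (hF.continuousOn.comp Complex.continuous_ofReal.continuousOn fun x hx => ?_)
  rw [mem_compl_iff, Complex.ofReal_injective.mem_set_image]
  exact disjoint_left.1 (hdisj (Finset.ne_of_mem_erase hj).symm) hx

theorem calH_eq_sum_dirichletExt {i : Fin d} {x : ℝ} (hx : ∀ j ≠ i, x ∉ Icc (A j) (B j)) :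
    calH d A B u i x =
      -(1 / 2) * ∑ j ∈ Finset.univ.erase i, dirichletExt (A j) (B j) (u j) x := by
  rw [calH]
  congr 1
  refine Finset.sum_congr rfl fun j hj => (dirichletExt_of_notMem ?_).symm
  rw [Complex.ofReal_injective.mem_set_image]
  exact hx j (Finset.ne_of_mem_erase hj)

theorem dirichletExt_eq_zero_of_calH_eq (hAB : ∀ i, A i < B i)
    (hdisj : Pairwise fun i j => Disjoint (Icc (A i) (B i)) (Icc (A j) (B j)))
    (hu : ∀ i, ContinuousOn (u i) (Icc (A i) (B i)))
    (hfix : ∀ i, ∀ x ∈ Icc (A i) (B i), calH d A B u i x = u i x) (i : Fin d) (z : ℂ) :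
    dirichletExt (A i) (B i) (u i) z = 0 := by
  refine IsBddHarmonicOff.eq_zero_of_add_sum_eq_zero
    (fun i => isBddHarmonicOff_dirichletExt (hAB i) (hu i)) (fun i => isCompact_Icc)
    (fun i => nonempty_Icc.2 (hAB i).le) hdisj (fun i x hx => ?_) i z
  have hfix_x := hfix i x hx
  rw [calH_eq_sum_dirichletExt fun j hj => disjoint_left.1 (hdisj hj.symm) hx] at hfix_x
  rw [← Finset.add_sum_erase _ _ (Finset.mem_univ i), dirichletExt_of_mem hx]
  linarith

theorem calH_eq_zero_of_calH_eq (hAB : ∀ i, A i < B i)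
    (hdisj : Pairwise fun i j => Disjoint (Icc (A i) (B i)) (Icc (A j) (B j)))
    (hu : ∀ i, ContinuousOn (u i) (Icc (A i) (B i)))
    (hfix : ∀ i, ∀ x ∈ Icc (A i) (B i), calH d A B u i x = u i x) {i : Fin d} {x : ℝ}
    (hx : ∀ j ≠ i, x ∉ Icc (A j) (B j)) : calH d A B u i x = 0 := by
  rw [calH_eq_sum_dirichletExt hx, Finset.sum_eq_zero fun j _ =>
    dirichletExt_eq_zero_of_calH_eq hAB hdisj hu hfix j x, mul_zero]

end FixedPoint

/-- Lemma 3.5: the only fixed point of `ℋ_{Δ⃗}` on `L¹(ω_{Δ⃗})` is the zero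
vector, and likewise for `ℋ_{Δ⃗*,Δ⃗}` on `C(Δ⃗)`. -/
theorem calH_fixed_point_trivial
    (d : ℕ) (A B : Fin d → ℝ) (hAB : ∀ i, A i < B i)
    (hdisj : ∀ i j, i ≠ j → Disjoint (Set.Icc (A i) (B i)) (Set.Icc (A j) (B j))) :
    -- `L¹` version for `ℋ_{Δ⃗}`
    (∀ u : Fin d → ℝ → ℝ,
      (∀ i, Integrable (u i) (arcsineMeasure (A i) (B i))) →
      (∀ i, ∀ᵐ x ∂(arcsineMeasure (A i) (B i)), calH d A B u i x = u i x) →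
      ∀ i, ∀ᵐ x ∂(arcsineMeasure (A i) (B i)), u i x = 0) ∧
    -- continuous version for `ℋ_{Δ⃗*,Δ⃗}` with `Δ*_i ⊆ Δ_i`
    (∀ Astar Bstar : Fin d → ℝ,
      (∀ i, A i ≤ Astar i ∧ Astar i < Bstar i ∧ Bstar i ≤ B i) →
      ∀ u : Fin d → ℝ → ℝ,
      (∀ i, ContinuousOn (u i) (Set.Icc (A i) (B i))) →
      (∀ i, ∀ x ∈ Set.Icc (A i) (B i), calH d Astar Bstar u i x = u i x) →
      ∀ i, ∀ x ∈ Set.Icc (A i) (B i), u i x = 0) := by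
  have notMem {i : Fin d} {x : ℝ} (hx : x ∈ Icc (A i) (B i)) (j : Fin d) (hj : j ≠ i) :
      x ∉ Icc (A j) (B j) := disjoint_left.1 (hdisj i j hj.symm) hx
  constructor
  · intro u hu hfix i
    have calH_calH (j : Fin d) (x : ℝ) : calH d A B (calH d A B u) j x = calH d A B u j x :=
      calH_congr_ae hfix j x
    filter_upwards [hfix i, ae_mem_arcsineMeasure (A i) (B i)] with x hxfix hx
    rw [← hxfix, ← calH_calH]
    exact calH_eq_zero_of_calH_eq hAB hdisj (continuousOn_calH (fun j => (hAB j).le) hdisj hu)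
      (fun j y _ => calH_calH j y) (notMem hx)
  · intro Astar Bstar hstar u hu hfix i x hx
    have subset (j : Fin d) : Icc (Astar j) (Bstar j) ⊆ Icc (A j) (B j) :=
      Icc_subset_Icc (hstar j).1 (hstar j).2.2
    rw [← hfix i x hx]
    exact calH_eq_zero_of_calH_eq (fun j => (hstar j).2.1)
      (fun j k hjk => (hdisj j k hjk).mono (subset j) (subset k))
      (fun j => (hu j).mono (subset j)) (fun j y hy => hfix j y (subset j hy))
      fun j hj hxj => notMem hx j hj (subset j hxj)

end
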